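/- Let f : 𝔹 → ℂ be holomorphic with f(0) = 1, F(x) = f(x)·x for x ∈ 𝔹, and assume F is biholomorphic on 𝔹. Then for all x ∈ 𝔹, ‖x‖(1−‖x‖)/(1+‖x‖)³ ≤ ‖DF(x)x‖ ≤ ‖x‖(1+‖x‖)/(1−‖x‖)³, where DF(x) is the Fréchet derivative of F at x. -/

import Mathlib

open Metric Set

noncomputable section

/-- A holomorphic map is biholomorphic on an open set `s` if it is holomorphic and injective
on `s` and admits a holomorphic inverse on the image `f '' s`. -/
def IsBiholoOn {E₁ E₂ : Type*} [NormedAddCommGroup E₁] [NormedSpace ℂ E₁]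
    [NormedAddCommGroup E₂] [NormedSpace ℂ E₂] (f : E₁ → E₂) (s : Set E₁) : Prop :=
  DifferentiableOn ℂ f s ∧ Set.InjOn f s ∧
    ∃ g : E₂ → E₁, DifferentiableOn ℂ g (f '' s) ∧ ∀ x ∈ s, g (f x) = x

/-!
Restricting `F` to the complex line through `x` reduces the estimate to the distortion theorem for
an injective holomorphic function `h` on the unit disc.

If `1 / z + q z` is injective on the punctured disc, it maps the annulus `ρ < ‖z‖ < r` into a set
close to an ellipse, which the real-linear map `w ↦ w - c * conj w` with `c = deriv q 0 * ρ ^ 2`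
straightens to a disc. Comparing areas as `ρ → 0` and then `r → 1` gives `‖deriv q 0‖ ≤ 1`. Applied
to an odd square root transform of `h` this is Bieberbach's inequality `‖h'' 0‖ ≤ 4 * ‖h' 0‖`;
precomposing with disc automorphisms moves it to every point of the disc. It then becomes a
differential inequality for `‖h'‖ ^ 2` along a radius, whose extremal solutions are the two bounds.
-/

open Filter MeasureTheory Topology
open scoped ComplexConjugate ENNReal Real

section Area

theorem lintegral_norm_sq_deriv_eq_volume_image {s : Set ℂ} {f f' : ℂ → ℂ} (hs : MeasurableSet s)
    (hf' : ∀ z ∈ s, HasDerivWithinAt f (f' z) s z) (hf : InjOn f s) :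
    ∫⁻ z in s, ENNReal.ofReal (‖f' z‖ ^ 2) = volume (f '' s) := by
  have abs_det_smul_one (a : ℂ) : |(a • (1 : ℂ →L[ℝ] ℂ)).det| = ‖a‖ ^ 2 := by
    rw [← abs_of_nonneg (sq_nonneg ‖a‖), Complex.sq_norm, ← Algebra.norm_complex_apply,
      Algebra.norm_apply]
    rfl
  simp only [← lintegral_abs_det_fderiv_eq_addHaar_image volume hs
    (fun z hz ↦ (hf' z hz).complexToReal_fderiv) hf, abs_det_smul_one]

theorem lintegral_eq_lintegral_circleMap {g : ℂ → ℝ≥0∞} (hg : Measurable g) :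
    ∫⁻ z, g z =
      ∫⁻ t in Ioi (0 : ℝ), ENNReal.ofReal t * ∫⁻ θ in Ioo (-π) π, g (circleMap 0 t θ) := by
  have symm_eq (p : ℝ × ℝ) : Complex.polarCoord.symm p = circleMap 0 p.1 p.2 := by
    simp [circleMap, Complex.exp_mul_I]
  have hmeas : Measurable fun p : ℝ × ℝ ↦ ENNReal.ofReal p.1 * g (circleMap 0 p.1 p.2) := by
    unfold circleMap
    fun_prop
  rw [← Complex.lintegral_comp_polarCoord_symm, polarCoord_target, Measure.volume_eq_prod,
    ← Measure.prod_restrict]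
  simp only [symm_eq, smul_eq_mul]
  rw [lintegral_prod _ hmeas.aemeasurable]
  simp only [lintegral_const_mul' _ _ ENNReal.ofReal_ne_top]

theorem lintegral_circleMap_ofReal {u : ℂ → ℝ} {c : ℂ} {t : ℝ}
    (hu : ContinuousOn u (sphere c |t|)) (hu₀ : 0 ≤ u) :
    ∫⁻ θ in Ioo (-π) π, ENNReal.ofReal (u (circleMap c t θ)) =
      ENNReal.ofReal (2 * π * Real.circleAverage u c t) := by
  have hcont : Continuous fun θ ↦ u (circleMap c t θ) :=
    hu.comp_continuous (continuous_circleMap c t) (circleMap_mem_sphere' c t)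
  rw [← ofReal_integral_eq_lintegral_ofReal
    (hcont.integrableOn_Icc.mono_set Ioo_subset_Icc_self) (ae_of_all _ fun θ ↦ hu₀ _)]
  rw [← integral_Ioc_eq_integral_Ioo,
    ← intervalIntegral.integral_of_le (by linarith [Real.pi_pos]),
    Real.circleAverage_eq_integral_add (-π),
    intervalIntegral.integral_comp_add_right fun θ ↦ u (circleMap c t θ), smul_eq_mul,
    mul_inv_cancel_left₀ Real.two_pi_pos.ne']
  ring_nf

theorem lintegral_annulus_ofReal {u : ℂ → ℝ} {r R : ℝ} (hr : 0 ≤ r)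
    (hu : ContinuousOn u (norm ⁻¹' Ioo r R)) (hu₀ : 0 ≤ u) :
    ∫⁻ z in norm ⁻¹' Ioo r R, ENNReal.ofReal (u z) =
      ∫⁻ t in Ioo r R, ENNReal.ofReal (2 * π * t * Real.circleAverage u 0 t) := by
  have hA : MeasurableSet (norm ⁻¹' Ioo r R : Set ℂ) := measurable_norm measurableSet_Ioo
  have hmeas : Measurable ((norm ⁻¹' Ioo r R).indicator fun z ↦ ENNReal.ofReal (u z)) := by
    classical
    rw [← piecewise_eq_indicator]
    exact (ENNReal.continuous_ofReal.comp_continuousOn hu).measurable_piecewise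
      continuousOn_const hA
  rw [← lintegral_indicator hA, lintegral_eq_lintegral_circleMap hmeas]
  conv_rhs =>
    rw [← inter_eq_left.2 (Ioo_subset_Ioi_self.trans (Ioi_subset_Ioi hr)),
      ← setLIntegral_indicator measurableSet_Ioo]
  refine setLIntegral_congr_fun measurableSet_Ioi fun t ht ↦ ?_
  have norm_eq (θ : ℝ) : ‖circleMap 0 t θ‖ = t := by rw [norm_circleMap_zero, abs_of_pos ht]
  by_cases htA : t ∈ Ioo r R
  · have hsphere : sphere (0 : ℂ) |t| ⊆ norm ⁻¹' Ioo r R := fun z hz ↦ by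
      rw [mem_preimage, mem_sphere_zero_iff_norm.1 hz, abs_of_pos ht]
      exact htA
    have hind (θ : ℝ) : (norm ⁻¹' Ioo r R).indicator (fun z ↦ ENNReal.ofReal (u z))
        (circleMap 0 t θ) = ENNReal.ofReal (u (circleMap 0 t θ)) :=
      indicator_of_mem (hsphere (circleMap_mem_sphere' 0 t θ)) _
    simp only [hind, indicator_of_mem htA]
    rw [lintegral_circleMap_ofReal (hu.mono hsphere) hu₀,
      ← ENNReal.ofReal_mul (le_of_lt ht)]
    ring_nf
  · simp [indicator, norm_eq, htA]

theorem norm_sq_add_le_circleAverage {Q : ℂ → ℂ} {r : ℝ} (hr : r ≠ 0)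
    (hQ : DiffContOnCl ℂ Q (ball 0 |r|)) (a : ℂ) {n : ℕ} (hn : n ≠ 0) :
    ‖a‖ ^ 2 + (r ^ n) ^ 2 * ‖Q 0‖ ^ 2 ≤
      Real.circleAverage (fun z ↦ ‖a + z ^ n * Q z‖ ^ 2) 0 r := by
  set b := Q 0
  -- The real part of `Φ` is `‖a + zⁿ Q z‖²` minus `r²ⁿ ‖b - Q z‖²` on the circle.
  set Φ : ℂ → ℂ := fun z ↦ (‖a‖ ^ 2 : ℝ) + (2 : ℝ) * (conj a * (z ^ n * Q z)) +
    ((r ^ n) ^ 2 : ℝ) * ((2 : ℝ) * (conj b * Q z) - (‖b‖ ^ 2 : ℝ))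
  have hQd := hQ.differentiableOn
  have hQc : ContinuousOn Q (closedBall 0 |r|) := by
    simpa only [closure_ball _ (abs_ne_zero.2 hr)] using hQ.continuousOn
  have hΦc : ContinuousOn Φ (closedBall 0 |r|) := by fun_prop
  have hΦ : DiffContOnCl ℂ Φ (ball 0 |r|) :=
    ⟨by fun_prop, hΦc.mono closure_ball_subset_closedBall⟩
  have re_eq (z : ℂ) : (Φ z).re = ‖a‖ ^ 2 + 2 * inner ℝ a (z ^ n * Q z) +
      (r ^ n) ^ 2 * (2 * inner ℝ b (Q z) - ‖b‖ ^ 2) := by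
    simp only [Φ, Complex.inner, Complex.add_re, Complex.sub_re, Complex.re_ofReal_mul,
      Complex.ofReal_re, mul_comm (z ^ n * Q z), mul_comm (Q z) (conj b)]
  have re_le (z : ℂ) (hz : z ∈ sphere 0 |r|) : (Φ z).re ≤ ‖a + z ^ n * Q z‖ ^ 2 := by
    have hzn : ‖z ^ n * Q z‖ ^ 2 = (r ^ n) ^ 2 * ‖Q z‖ ^ 2 := by
      rw [norm_mul, norm_pow, mem_sphere_zero_iff_norm.1 hz, mul_pow, ← abs_pow, sq_abs]
    have hb := mul_nonneg (sq_nonneg (r ^ n)) (sq_nonneg ‖b - Q z‖)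
    rw [norm_sub_sq_real] at hb
    rw [re_eq, norm_add_sq_real, hzn]
    linarith
  have re_zero : (Φ 0).re = ‖a‖ ^ 2 + (r ^ n) ^ 2 * ‖b‖ ^ 2 := by
    rw [re_eq, real_inner_self_eq_norm_sq, zero_pow hn, zero_mul, inner_zero_right]
    ring
  have hΦint : CircleIntegrable Φ 0 r := (hΦc.mono sphere_subset_closedBall).circleIntegrable'
  have hrec : ContinuousOn (fun z ↦ (Φ z).re) (closedBall 0 |r|) := by fun_prop
  have hc : ContinuousOn (fun z ↦ ‖a + z ^ n * Q z‖ ^ 2) (closedBall 0 |r|) := by fun_prop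
  rw [← re_zero, ← hΦ.circleAverage, ← Complex.reCLM_apply,
    ← Complex.reCLM.circleAverage_comp_comm hΦint]
  exact Real.circleAverage_mono (hrec.mono sphere_subset_closedBall).circleIntegrable'
    (hc.mono sphere_subset_closedBall).circleIntegrable' re_le

theorem norm_sq_div_add_le_circleAverage {Q : ℂ → ℂ} {r : ℝ} (hr : r ≠ 0)
    (hQ : DiffContOnCl ℂ Q (ball 0 |r|)) (a : ℂ) {n : ℕ} (hn : n ≠ 0) :
    ‖a‖ ^ 2 / (r ^ n) ^ 2 + ‖Q 0‖ ^ 2 ≤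
      Real.circleAverage (fun z ↦ ‖a / z ^ n + Q z‖ ^ 2) 0 r := by
  have hpos : 0 < (r ^ n) ^ 2 := sq_pos_of_ne_zero (pow_ne_zero n hr)
  have factor : EqOn (fun z ↦ ‖a / z ^ n + Q z‖ ^ 2)
      (fun z ↦ ((r ^ n) ^ 2)⁻¹ • ‖a + z ^ n * Q z‖ ^ 2) (sphere 0 |r|) := fun z hz ↦ by
    have hz₀ : z ≠ 0 := ne_of_mem_sphere hz (abs_ne_zero.2 hr)
    have norm_pow_sq : ‖z ^ n‖ ^ 2 = (r ^ n) ^ 2 := by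
      rw [norm_pow, mem_sphere_zero_iff_norm.1 hz, ← abs_pow, sq_abs]
    dsimp only
    rw [← norm_pow_sq, smul_eq_mul, ← inv_pow, ← norm_inv, ← mul_pow, ← norm_mul]
    field_simp
  rw [Real.circleAverage_congr_sphere factor, Real.circleAverage_fun_smul, smul_eq_mul,
    ← div_eq_inv_mul, le_div_iff₀ hpos, add_mul, div_mul_cancel₀ _ hpos.ne', mul_comm (‖Q 0‖ ^ 2)]
  exact norm_sq_add_le_circleAverage hr hQ a hn

theorem lintegral_Ioo_two_pi_mul_inv_pow_add {ρ r B : ℝ} (hρ : 0 < ρ) (hρr : ρ ≤ r) (hB : 0 ≤ B) :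
    ∫⁻ t in Ioo ρ r, ENNReal.ofReal (2 * π * t * (1 / t ^ 4 + B)) =
      ENNReal.ofReal (π * (1 / ρ ^ 2 - 1 / r ^ 2 + B * (r ^ 2 - ρ ^ 2))) := by
  have pos_of_mem {t : ℝ} (ht : t ∈ Icc ρ r) : 0 < t := hρ.trans_le ht.1
  have hcont : ContinuousOn (fun t : ℝ ↦ 2 * π * t * (1 / t ^ 4 + B)) (Icc ρ r) := by
    have (t : ℝ) (ht : t ∈ Icc ρ r) : t ^ 4 ≠ 0 := (pow_pos (pos_of_mem ht) 4).ne'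
    fun_prop (disch := assumption)
  have hderiv (t : ℝ) (ht : t ∈ uIcc ρ r) :
      HasDerivAt (fun t ↦ π * (B * t ^ 2 - (t ^ 2)⁻¹)) (2 * π * t * (1 / t ^ 4 + B)) t := by
    have ht₀ : t ≠ 0 := (pos_of_mem (uIcc_of_le hρr ▸ ht)).ne'
    have hsq := hasDerivAt_pow 2 t
    refine (((hsq.const_mul B).sub (hsq.fun_inv (pow_ne_zero 2 ht₀))).const_mul π).congr_deriv ?_
    simp only [Nat.cast_ofNat, Nat.add_one_sub_one, pow_one, one_div]
    field_simp
    ring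
  rw [← ofReal_integral_eq_lintegral_ofReal
      (hcont.integrableOn_Icc.mono_set Ioo_subset_Icc_self)
      ((ae_restrict_iff' measurableSet_Ioo).2 <| ae_of_all _ fun t ht ↦ ?_),
    ← integral_Ioc_eq_integral_Ioo, ← intervalIntegral.integral_of_le hρr,
    intervalIntegral.integral_eq_sub_of_hasDerivAt hderiv
      (hcont.intervalIntegrable_of_Icc hρr)]
  · ring_nf
  · have := pos_of_mem (Ioo_subset_Icc_self ht)
    positivity

theorem le_lintegral_annulus_norm_sq_div_add {Q : ℂ → ℂ} {ρ r : ℝ} (hρ : 0 < ρ) (hρr : ρ ≤ r)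
    (hQ : DifferentiableOn ℂ Q (ball 0 r)) :
    ENNReal.ofReal (π * (1 / ρ ^ 2 - 1 / r ^ 2 + ‖Q 0‖ ^ 2 * (r ^ 2 - ρ ^ 2))) ≤
      ∫⁻ z in norm ⁻¹' Ioo ρ r, ENNReal.ofReal (‖-1 / z ^ 2 + Q z‖ ^ 2) := by
  have hcont : ContinuousOn (fun z ↦ ‖-1 / z ^ 2 + Q z‖ ^ 2) (norm ⁻¹' Ioo ρ r) := by
    have hQc : ContinuousOn Q (norm ⁻¹' Ioo ρ r) :=
      hQ.continuousOn.mono fun z hz ↦ mem_ball_zero_iff.2 hz.2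
    have (z : ℂ) (hz : z ∈ norm ⁻¹' Ioo ρ r) : z ^ 2 ≠ 0 :=
      pow_ne_zero 2 (norm_pos_iff.1 (hρ.trans hz.1))
    fun_prop (disch := assumption)
  rw [lintegral_annulus_ofReal hρ.le hcont fun z ↦ sq_nonneg _,
    ← lintegral_Ioo_two_pi_mul_inv_pow_add hρ hρr (sq_nonneg _)]
  refine setLIntegral_mono' measurableSet_Ioo fun t ht ↦ ENNReal.ofReal_le_ofReal ?_
  have ht₀ : 0 < t := hρ.trans ht.1
  have hQt : DiffContOnCl ℂ Q (ball 0 |t|) :=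
    (hQ.mono (closedBall_subset_ball (by rw [abs_of_pos ht₀]; exact ht.2))).diffContOnCl_ball
      subset_rfl
  have havg := norm_sq_div_add_le_circleAverage ht₀.ne' hQt (-1) two_ne_zero
  rw [norm_neg, norm_one, one_pow, ← pow_mul] at havg
  gcongr

/-- The real-linear map `w ↦ w - c * conj w`. The choice `c = b * ρ ^ 2` straightens the ellipse
that is the image of the circle `‖z‖ = ρ` under `z ↦ 1 / z + b * z` to a circle about the origin. -/
def subMulConj (c : ℂ) : ℂ →L[ℝ] ℂ :=
  1 - c • (Complex.conjCLE : ℂ →L[ℝ] ℂ)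

theorem subMulConj_apply (c w : ℂ) : subMulConj c w = w - c * conj w := by
  simp [subMulConj]

theorem det_subMulConj (c : ℂ) :
    LinearMap.det (subMulConj c : ℂ →ₗ[ℝ] ℂ) = 1 - ‖c‖ ^ 2 := by
  have hmatrix : LinearMap.toMatrix Complex.basisOneI Complex.basisOneI (subMulConj c) =
      !![1 - c.re, -c.im; -c.im, 1 + c.re] := by
    ext i j
    fin_cases i <;> fin_cases j <;> simp [LinearMap.toMatrix_apply, subMulConj_apply]
  rw [← LinearMap.det_toMatrix Complex.basisOneI, hmatrix, Matrix.det_fin_two_of, Complex.sq_norm,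
    Complex.normSq_apply]
  ring

theorem volume_preimage_subMulConj_closedBall {c : ℂ} (hc : ‖c‖ < 1) {R : ℝ} (hR : 0 ≤ R) :
    volume (subMulConj c ⁻¹' closedBall 0 R) = ENNReal.ofReal (π * R ^ 2 / (1 - ‖c‖ ^ 2)) := by
  have hdet : 0 < 1 - ‖c‖ ^ 2 := sub_pos.2 (pow_lt_one₀ (norm_nonneg c) hc two_ne_zero)
  rw [Measure.addHaar_preimage_continuousLinearMap volume
    (by rw [det_subMulConj]; exact hdet.ne'), det_subMulConj, abs_of_pos (inv_pos.2 hdet),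
    Complex.volume_closedBall, ← ENNReal.ofReal_pow hR, ← ENNReal.ofReal_coe_nnreal,
    NNReal.coe_real_pi, ← ENNReal.ofReal_mul (by positivity),
    ← ENNReal.ofReal_mul (by positivity)]
  ring_nf

theorem one_div_add_le_one_div_add {t ρ β K : ℝ} (hρ : 0 < ρ) (hρt : ρ ≤ t) (ht : t ≤ 1)
    (hβ : 0 ≤ β) (hK : 0 ≤ K) (h : 2 * ρ * (β + K) ≤ 1) :
    1 / t + β * (t ^ 2 - ρ ^ 2) / t + K * t ^ 2 ≤ 1 / ρ + K * ρ ^ 2 := by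
  have ht₀ : 0 < t := hρ.trans_le hρt
  have hsmall : ρ * (t + ρ) * (β + K * t) ≤ ρ * 2 * (β + K) := by
    have : t + ρ ≤ 2 := by linarith
    have : K * t ≤ K := mul_le_of_le_one_right hK ht
    gcongr
  have hdiff : 1 / ρ + K * ρ ^ 2 - (1 / t + β * (t ^ 2 - ρ ^ 2) / t + K * t ^ 2) =
      (t - ρ) / (ρ * t) * (1 - ρ * (t + ρ) * (β + K * t)) := by
    field_simp
    ring
  exact sub_nonneg.1 <| hdiff ▸ mul_nonneg (div_nonneg (sub_nonneg.2 hρt) (by positivity))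
    (by linarith)

theorem subMulConj_one_div_add {z : ℂ} (hz : z ≠ 0) (b e : ℂ) (ρ : ℝ) :
    subMulConj (b * ρ ^ 2) (1 / z + b * z + e) =
      1 / z + b * (‖z‖ ^ 2 - ρ ^ 2 : ℝ) / conj z +
        (e - b * ρ ^ 2 * conj (b * z) - b * ρ ^ 2 * conj e) := by
  have hz' : conj z ≠ 0 := (map_ne_zero _).2 hz
  rw [subMulConj_apply, ← Complex.normSq_eq_norm_sq]
  push_cast
  rw [← Complex.mul_conj]
  simp only [map_add, map_div₀, map_one, map_mul]
  field_simp
  ring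

theorem norm_subMulConj_one_div_add_le {z b e : ℂ} {ρ C : ℝ} (hρ : 0 < ρ) (hρz : ρ ≤ ‖z‖)
    (hz : ‖z‖ ≤ 1) (hC : 0 ≤ C) (he : ‖e‖ ≤ C * ‖z‖ ^ 2)
    (h : 2 * ρ * (‖b‖ + (C * (1 + ‖b‖) + ‖b‖ ^ 2)) ≤ 1) :
    ‖subMulConj (b * ρ ^ 2) (1 / z + b * z + e)‖ ≤
      1 / ρ + (C * (1 + ‖b‖) + ‖b‖ ^ 2) * ρ ^ 2 := by
  have hz₀ : 0 < ‖z‖ := hρ.trans_le hρz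
  have hρz2 : ρ ^ 2 ≤ ‖z‖ ^ 2 := by gcongr
  have norm_main : ‖b * (‖z‖ ^ 2 - ρ ^ 2 : ℝ) / conj z‖ = ‖b‖ * (‖z‖ ^ 2 - ρ ^ 2) / ‖z‖ := by
    rw [norm_div, norm_mul, Complex.norm_real, Real.norm_of_nonneg (sub_nonneg.2 hρz2),
      RCLike.norm_conj]
  have norm_rem : ‖e - b * ρ ^ 2 * conj (b * z) - b * ρ ^ 2 * conj e‖ ≤
      (C * (1 + ‖b‖) + ‖b‖ ^ 2) * ‖z‖ ^ 2 := by
    calc ‖e - b * ρ ^ 2 * conj (b * z) - b * ρ ^ 2 * conj e‖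
        ≤ ‖e‖ + ‖b‖ * ρ ^ 2 * (‖b‖ * ‖z‖) + ‖b‖ * ρ ^ 2 * ‖e‖ := by
          refine (norm_sub_le _ _).trans (add_le_add ((norm_sub_le _ _).trans_eq ?_) ?_) <;>
            simp
      _ ≤ C * ‖z‖ ^ 2 + ‖b‖ * ‖z‖ ^ 2 * (‖b‖ * 1) + ‖b‖ * 1 * (C * ‖z‖ ^ 2) := by
          have : ρ ^ 2 ≤ 1 := hρz2.trans (pow_le_one₀ (norm_nonneg z) hz)
          gcongr
      _ = (C * (1 + ‖b‖) + ‖b‖ ^ 2) * ‖z‖ ^ 2 := by ring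
  calc ‖subMulConj (b * ρ ^ 2) (1 / z + b * z + e)‖
      ≤ 1 / ‖z‖ + ‖b‖ * (‖z‖ ^ 2 - ρ ^ 2) / ‖z‖ + (C * (1 + ‖b‖) + ‖b‖ ^ 2) * ‖z‖ ^ 2 := by
        rw [subMulConj_one_div_add (norm_pos_iff.1 hz₀), ← norm_main]
        refine (norm_add₃_le).trans ?_
        rw [norm_div, norm_one]
        gcongr
    _ ≤ _ := one_div_add_le_one_div_add hρ hρz hz (norm_nonneg b) (by positivity) h

theorem exists_norm_sub_sub_smul_deriv_le {E : Type*} [NormedAddCommGroup E] [NormedSpace ℂ E]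
    [CompleteSpace E] {q : ℂ → E} {c : ℂ} {r R : ℝ} (hR : 0 < R) (hrR : r < R)
    (hq : DifferentiableOn ℂ q (ball c R)) :
    ∃ C : ℝ, 0 ≤ C ∧
      ∀ z ∈ closedBall c r, ‖q z - q c - (z - c) • deriv q c‖ ≤ C * ‖z - c‖ ^ 2 := by
  have hc : ball c R ∈ 𝓝 c := ball_mem_nhds c hR
  have hd : DifferentiableOn ℂ (dslope (dslope q c) c) (ball c R) :=
    (Complex.differentiableOn_dslope hc).2 <| (Complex.differentiableOn_dslope hc).2 hq
  obtain ⟨C, hC⟩ := (isCompact_closedBall c r).exists_bound_of_continuousOn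
    (hd.continuousOn.mono (closedBall_subset_ball hrR))
  refine ⟨max C 0, le_max_right C 0, fun z hz ↦ ?_⟩
  have taylor : q z - q c - (z - c) • deriv q c =
      (z - c) ^ 2 • dslope (dslope q c) c z := by
    rw [← sub_smul_dslope q c z, ← dslope_same q c, ← smul_sub, ← sub_smul_dslope (dslope q c) c z,
      smul_smul, sq]
  rw [taylor, norm_smul, norm_pow, mul_comm]
  gcongr
  exact (hC z hz).trans (le_max_left C 0)

theorem norm_mul_ofReal_sq_lt_one {b : ℂ} {ρ K : ℝ} (hρ : 0 ≤ ρ) (hρ₁ : ρ ≤ 1) (hK : 0 ≤ K)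
    (h : 2 * ρ * (‖b‖ + K) ≤ 1) : ‖b * (ρ : ℂ) ^ 2‖ < 1 := by
  have hρK : 0 ≤ ρ * K := mul_nonneg hρ hK
  calc ‖b * (ρ : ℂ) ^ 2‖ = ‖b‖ * ρ * ρ := by simp [sq, mul_assoc]
    _ ≤ ‖b‖ * ρ * 1 := by gcongr
    _ < 1 := by linarith

theorem hasDerivAt_one_div_add {q : ℂ → ℂ} {z : ℂ} (hz : z ≠ 0) (hq : DifferentiableAt ℂ q z) :
    HasDerivAt (fun z ↦ 1 / z + q z) (-1 / z ^ 2 + deriv q z) z := by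
  simpa only [one_div, neg_div] using (hasDerivAt_inv hz).fun_add hq.hasDerivAt

theorem area_inequality_annulus {q : ℂ → ℂ} {ρ r C : ℝ} (hρ : 0 < ρ) (hρr : ρ ≤ r) (hr : r ≤ 1)
    (hC : 0 ≤ C) (hq : DifferentiableOn ℂ q (ball 0 r))
    (hinj : InjOn (fun z ↦ 1 / z + q z) (norm ⁻¹' Ioo ρ r))
    (hrem : ∀ z ∈ ball 0 r, ‖q z - q 0 - z * deriv q 0‖ ≤ C * ‖z‖ ^ 2)
    (hsmall : 2 * ρ * (‖deriv q 0‖ + (C * (1 + ‖deriv q 0‖) + ‖deriv q 0‖ ^ 2)) ≤ 1) :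
    (1 - ‖deriv q 0‖ ^ 2 * ρ ^ 4) *
        (1 / ρ ^ 2 - 1 / r ^ 2 + ‖deriv q 0‖ ^ 2 * (r ^ 2 - ρ ^ 2)) ≤
      (1 / ρ + (C * (1 + ‖deriv q 0‖) + ‖deriv q 0‖ ^ 2) * ρ ^ 2) ^ 2 := by
  set b := deriv q 0
  set R := 1 / ρ + (C * (1 + ‖b‖) + ‖b‖ ^ 2) * ρ ^ 2
  have norm_c : ‖b * (ρ : ℂ) ^ 2‖ = ‖b‖ * ρ ^ 2 := by simp
  have norm_c_lt : ‖b * (ρ : ℂ) ^ 2‖ < 1 :=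
    norm_mul_ofReal_sq_lt_one hρ.le (hρr.trans hr) (by positivity) hsmall
  have hdet : 0 < 1 - ‖b * (ρ : ℂ) ^ 2‖ ^ 2 :=
    sub_pos.2 (pow_lt_one₀ (norm_nonneg _) norm_c_lt two_ne_zero)
  have hderiv (z : ℂ) (hz : z ∈ norm ⁻¹' Ioo ρ r) : HasDerivWithinAt (fun z ↦ 1 / z + q z - q 0)
      (-1 / z ^ 2 + deriv q z) (norm ⁻¹' Ioo ρ r) z :=
    ((hasDerivAt_one_div_add (norm_pos_iff.1 (hρ.trans hz.1)) <|
      hq.differentiableAt <| isOpen_ball.mem_nhds <| mem_ball_zero_iff.2 hz.2).sub_const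
      (q 0)).hasDerivWithinAt
  have hsub : (fun z ↦ 1 / z + q z - q 0) '' (norm ⁻¹' Ioo ρ r) ⊆
      subMulConj (b * ρ ^ 2) ⁻¹' closedBall 0 R := by
    rintro _ ⟨z, hz, rfl⟩
    have h := norm_subMulConj_one_div_add_le hρ hz.1.le (hz.2.le.trans hr) hC
      (hrem z (mem_ball_zero_iff.2 hz.2)) hsmall
    rwa [add_assoc, mul_comm b z, add_sub_cancel, ← add_sub_assoc, ← mem_closedBall_zero_iff] at h
  have harea := (le_lintegral_annulus_norm_sq_div_add hρ hρr (hq.deriv isOpen_ball)).trans <|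
    (lintegral_norm_sq_deriv_eq_volume_image (measurable_norm measurableSet_Ioo) hderiv
      fun z hz w hw h ↦ hinj hz hw (sub_left_injective h)).trans_le <|
    (measure_mono hsub).trans_eq (volume_preimage_subMulConj_closedBall norm_c_lt (by positivity))
  rw [ENNReal.ofReal_le_ofReal_iff (by positivity), mul_div_assoc,
    mul_le_mul_iff_right₀ Real.pi_pos, le_div_iff₀' hdet, norm_c, mul_pow, ← pow_mul] at harea
  exact harea

theorem norm_deriv_mul_sq_le_one {q : ℂ → ℂ} (hq : DifferentiableOn ℂ q (ball 0 1))
    (hinj : InjOn (fun z ↦ 1 / z + q z) (ball 0 1 \ {0})) {r : ℝ} (hr : r ∈ Ioo 0 1) :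
    ‖deriv q 0‖ * r ^ 2 ≤ 1 := by
  obtain ⟨C, hC, hrem⟩ := exists_norm_sub_sub_smul_deriv_le one_pos hr.2 hq
  simp only [sub_zero, smul_eq_mul] at hrem
  set β := ‖deriv q 0‖
  set K := C * (1 + β) + β ^ 2
  set A := β ^ 2 * r ^ 2 - 1 / r ^ 2
  have hsmall : ∀ᶠ ρ : ℝ in 𝓝[>] 0, 2 * ρ * (β + K) < 1 :=
    nhdsWithin_le_nhds <| (by fun_prop : Continuous fun ρ : ℝ ↦ 2 * ρ * (β + K)).continuousAt
      |>.eventually_lt_const (by simp)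
  have hle : ∀ᶠ ρ : ℝ in 𝓝[>] 0, A ≤
      2 * K * ρ + 2 * β ^ 2 * ρ ^ 2 + (K ^ 2 + β ^ 2 * A) * ρ ^ 4 - β ^ 4 * ρ ^ 6 := by
    filter_upwards [hsmall, Ioo_mem_nhdsGT hr.1] with ρ hρ hρr
    have hρ₀ : ρ ≠ 0 := hρr.1.ne'
    have hr₀ : r ≠ 0 := hr.1.ne'
    have hannulus : norm ⁻¹' Ioo ρ r ⊆ ball (0 : ℂ) 1 \ {0} := fun z hz ↦
      ⟨mem_ball_zero_iff.2 (hz.2.trans hr.2), norm_pos_iff.1 (hρr.1.trans hz.1)⟩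
    have h := area_inequality_annulus hρr.1 hρr.2.le hr.2.le hC (hq.mono (ball_subset_ball hr.2.le))
      (hinj.mono hannulus) (fun z hz ↦ hrem z (ball_subset_closedBall hz)) hρ.le
    have hexpand : (1 - β ^ 2 * ρ ^ 4) * (1 / ρ ^ 2 - 1 / r ^ 2 + β ^ 2 * (r ^ 2 - ρ ^ 2)) -
        (1 / ρ + K * ρ ^ 2) ^ 2 =
        A - (2 * K * ρ + 2 * β ^ 2 * ρ ^ 2 + (K ^ 2 + β ^ 2 * A) * ρ ^ 4 - β ^ 4 * ρ ^ 6) := by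
      simp only [A]
      field_simp
      ring
    linarith
  have htendsto : Tendsto (fun ρ : ℝ ↦
      2 * K * ρ + 2 * β ^ 2 * ρ ^ 2 + (K ^ 2 + β ^ 2 * A) * ρ ^ 4 - β ^ 4 * ρ ^ 6)
      (𝓝[>] 0) (𝓝 0) :=
    tendsto_nhdsWithin_of_tendsto_nhds <| Continuous.tendsto' (by fun_prop) _ _ (by simp)
  have hA : β ^ 2 * r ^ 2 ≤ 1 / r ^ 2 := sub_nonpos.1 (ge_of_tendsto htendsto hle)
  rw [le_div_iff₀ (pow_pos hr.1 2)] at hA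
  exact (sq_le_one_iff₀ (by positivity)).1 (by linarith)

theorem norm_deriv_le_one_of_injOn_one_div_add {q : ℂ → ℂ} (hq : DifferentiableOn ℂ q (ball 0 1))
    (hinj : InjOn (fun z ↦ 1 / z + q z) (ball 0 1 \ {0})) : ‖deriv q 0‖ ≤ 1 := by
  have htendsto : Tendsto (fun r : ℝ ↦ ‖deriv q 0‖ * r ^ 2) (𝓝[<] 1) (𝓝 ‖deriv q 0‖) :=
    tendsto_nhdsWithin_of_tendsto_nhds <| Continuous.tendsto' (by fun_prop) _ _ (by simp)
  refine le_of_tendsto htendsto ?_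
  filter_upwards [Ioo_mem_nhdsLT one_pos] with r hr
  exact norm_deriv_mul_sq_le_one hq hinj hr

end Area

section Bieberbach

theorem exists_differentiableOn_exp_eq {k : ℂ → ℂ} {c : ℂ} {R : ℝ} (hR : 0 < R)
    (hk : DifferentiableOn ℂ k (ball c R)) (hne : ∀ z ∈ ball c R, k z ≠ 0) :
    ∃ L : ℂ → ℂ, DifferentiableOn ℂ L (ball c R) ∧ ∀ z ∈ ball c R, Complex.exp (L z) = k z := by
  have hc : c ∈ ball c R := mem_ball_self hR
  obtain ⟨L, hLc, hL⟩ :=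
    ((hk.deriv isOpen_ball).div hk hne).isExactOn_ball.with_val_at c (Complex.log (k c))
  have hderiv (z : ℂ) (hz : z ∈ ball c R) :
      HasDerivAt (fun z ↦ Complex.exp (-L z) * k z) 0 z := by
    refine ((hL z hz).fun_neg.cexp.fun_mul
      (hk.differentiableAt (isOpen_ball.mem_nhds hz)).hasDerivAt).congr_deriv ?_
    have := hne z hz
    simp only [Pi.div_apply]
    field_simp
    ring
  refine ⟨L, fun z hz ↦ (hL z hz).differentiableAt.differentiableWithinAt, fun z hz ↦ ?_⟩
  have hconst := isOpen_ball.is_const_of_deriv_eq_zero (convex_ball c R).isPreconnected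
    (fun z hz ↦ (hderiv z hz).differentiableAt.differentiableWithinAt)
    (fun z hz ↦ (hderiv z hz).deriv) hz hc
  rwa [hLc, Complex.exp_neg, Complex.exp_neg, Complex.exp_log (hne c hc),
    inv_mul_cancel₀ (hne c hc), inv_mul_eq_one₀ (Complex.exp_ne_zero _)] at hconst

theorem exists_differentiableOn_pow_mul_eq {k : ℂ → ℂ} {c : ℂ} {R : ℝ} (hR : 0 < R)
    (hk : DifferentiableOn ℂ k (ball c R)) (hne : ∀ z ∈ ball c R, k z ≠ 0) {n : ℕ} (hn : n ≠ 0) :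
    ∃ φ : ℂ → ℂ, DifferentiableOn ℂ φ (ball c R) ∧ φ c = 1 ∧
      (∀ z ∈ ball c R, φ z ^ n * k z = k c) ∧ n * deriv φ c * k c = -deriv k c := by
  have hc : c ∈ ball c R := mem_ball_self hR
  obtain ⟨L, hL, hexp⟩ := exists_differentiableOn_exp_eq hR hk hne
  have hn' : (n : ℂ) ≠ 0 := Nat.cast_ne_zero.2 hn
  have hLc := (hL.differentiableAt (isOpen_ball.mem_nhds hc)).hasDerivAt
  refine ⟨fun z ↦ Complex.exp ((L c - L z) / n), by fun_prop, by simp, fun z hz ↦ ?_, ?_⟩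
  · rw [← Complex.exp_nat_mul, mul_div_cancel₀ _ hn', Complex.exp_sub, hexp z hz, hexp c hc,
      div_mul_cancel₀ _ (hne z hz)]
  · have hkc : deriv k c = k c * deriv L c := by
      have heq : (fun z ↦ Complex.exp (L z)) =ᶠ[𝓝 c] k :=
        eventually_of_mem (isOpen_ball.mem_nhds hc) hexp
      rw [← heq.deriv_eq, hLc.cexp.deriv, hexp c hc]
    rw [((hLc.const_sub (L c)).div_const (n : ℂ)).cexp.deriv, hkc]
    simp only [sub_self, zero_div, Complex.exp_zero, one_mul]
    field_simp

theorem deriv_dslope_same {f : ℂ → ℂ} {s : Set ℂ} {c : ℂ} (hs : s ∈ 𝓝 c)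
    (hf : DifferentiableOn ℂ f s) : 2 * deriv (dslope f c) c = deriv (deriv f) c := by
  have hd := (Complex.differentiableOn_dslope hs).2 hf
  have hderiv : deriv f =ᶠ[𝓝 c] fun z ↦ dslope f c z + (z - c) * deriv (dslope f c) z := by
    filter_upwards [eventually_mem_nhds_iff.2 hs] with z hz
    have hmul := (((hasDerivAt_id' z).sub_const c).fun_mul
      (hd.differentiableAt hz).hasDerivAt).const_add (f c)
    have hfun : f = fun w ↦ f c + (w - c) * dslope f c w := funext fun w ↦ by
      rw [← smul_eq_mul, sub_smul_dslope, add_sub_cancel]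
    rw [← hfun] at hmul
    rw [hmul.deriv, one_mul]
  have hdc := (hd.differentiableAt hs).hasDerivAt
  have hddc := ((hd.mono interior_subset).deriv isOpen_interior).differentiableAt
    (isOpen_interior.mem_nhds (mem_interior_iff_mem_nhds.2 hs))
  rw [hderiv.deriv_eq,
    (hdc.fun_add (((hasDerivAt_id' c).sub_const c).fun_mul hddc.hasDerivAt)).deriv]
  ring

theorem mapsTo_sq_ball_zero_one :
    MapsTo (fun z : ℂ ↦ z ^ 2) (ball 0 1) (ball 0 1) := fun z hz ↦ by
  simp only [mem_ball_zero_iff, norm_pow] at hz ⊢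
  exact pow_lt_one₀ (norm_nonneg z) hz two_ne_zero

theorem injOn_comp_sq_div {h φ : ℂ → ℂ} {κ : ℂ} (hκ : κ ≠ 0) (hinj : InjOn h (ball 0 1))
    (hφ : ∀ w ∈ ball 0 1, φ w ^ 2 * h w = κ * w) :
    InjOn (fun z ↦ φ (z ^ 2) / z) (ball 0 1 \ {0}) := by
  rintro z ⟨hz, hz₀⟩ w ⟨hw, hw₀⟩ (hzw : φ (z ^ 2) / z = φ (w ^ 2) / w)
  have transform {z : ℂ} (hz : z ∈ ball 0 1) (hz₀ : z ≠ 0) :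
      (φ (z ^ 2) / z) ^ 2 * h (z ^ 2) = κ := by
    rw [div_pow, div_mul_eq_mul_div, hφ _ (mapsTo_sq_ball_zero_one hz),
      mul_div_cancel_right₀ _ (pow_ne_zero 2 hz₀)]
  have hne : φ (z ^ 2) / z ≠ 0 := fun h₀ ↦ hκ <| by
    rw [← transform hz hz₀, h₀]
    ring
  have hh : h (z ^ 2) = h (w ^ 2) := mul_left_cancel₀ (pow_ne_zero 2 hne) <| by
    rw [transform hz hz₀, hzw, transform hw hw₀]
  have hsq : z ^ 2 = w ^ 2 := hinj (mapsTo_sq_ball_zero_one hz) (mapsTo_sq_ball_zero_one hw) hh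
  refine (sq_eq_sq_iff_eq_or_eq_neg.1 hsq).resolve_right fun hneg ↦ hne ?_
  rw [← hsq, ← neg_eq_iff_eq_neg.2 hneg, div_neg] at hzw
  exact self_eq_neg.1 hzw

theorem norm_deriv_le_one_of_injOn_comp_sq_div {φ : ℂ → ℂ} (hφ : DifferentiableOn ℂ φ (ball 0 1))
    (hφ₀ : φ 0 = 1) (hinj : InjOn (fun z ↦ φ (z ^ 2) / z) (ball 0 1 \ {0})) :
    ‖deriv φ 0‖ ≤ 1 := by
  have hball : ball (0 : ℂ) 1 ∈ 𝓝 0 := ball_mem_nhds 0 one_pos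
  have hm : DifferentiableOn ℂ (fun z ↦ dslope φ 0 (z ^ 2)) (ball 0 1) :=
    ((Complex.differentiableOn_dslope hball).2 hφ).comp (by fun_prop) mapsTo_sq_ball_zero_one
  have hq : HasDerivAt (fun z ↦ z * dslope φ 0 (z ^ 2)) (deriv φ 0) 0 := by
    simpa using (hasDerivAt_id' (0 : ℂ)).fun_mul (hm.differentiableAt hball).hasDerivAt
  have hG : EqOn (fun z ↦ φ (z ^ 2) / z) (fun z ↦ 1 / z + z * dslope φ 0 (z ^ 2))
      (ball 0 1 \ {0}) := fun z hz ↦ by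
    have hz₀ : z ≠ 0 := hz.2
    have hφz : φ (z ^ 2) = 1 + z ^ 2 * dslope φ 0 (z ^ 2) := by
      have := sub_smul_dslope φ 0 (z ^ 2)
      rwa [sub_zero, smul_eq_mul, hφ₀, eq_comm, sub_eq_iff_eq_add'] at this
    simp only [hφz]
    field_simp
  rw [← hq.deriv]
  exact norm_deriv_le_one_of_injOn_one_div_add (differentiableOn_id.fun_mul hm)
    (hinj.congr hG)

theorem norm_deriv_deriv_zero_le {h : ℂ → ℂ} (hd : DifferentiableOn ℂ h (ball 0 1))
    (hinj : InjOn h (ball 0 1)) (hne : deriv h 0 ≠ 0) :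
    ‖deriv (deriv h) 0‖ ≤ 4 * ‖deriv h 0‖ := by
  have hball : ball (0 : ℂ) 1 ∈ 𝓝 0 := ball_mem_nhds 0 one_pos
  have hk := (Complex.differentiableOn_dslope hball).2 hd
  have hkz (z : ℂ) : z * dslope h 0 z = h z - h 0 := by
    simpa only [sub_zero, smul_eq_mul] using sub_smul_dslope h 0 z
  have hk_ne (z : ℂ) (hz : z ∈ ball 0 1) : dslope h 0 z ≠ 0 := fun hz₀ ↦ by
    have hhz : h z = h 0 := by rw [← sub_eq_zero, ← hkz, hz₀, mul_zero]
    obtain rfl : z = 0 := hinj hz (mem_ball_self one_pos) hhz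
    exact hne (dslope_same h 0 ▸ hz₀)
  obtain ⟨φ, hφ, hφ₀, hφk, hφ'⟩ := exists_differentiableOn_pow_mul_eq one_pos hk hk_ne two_ne_zero
  rw [dslope_same] at hφk hφ'
  have hφinj : InjOn (fun z ↦ φ (z ^ 2) / z) (ball 0 1 \ {0}) := by
    refine injOn_comp_sq_div hne (h := fun z ↦ h z - h 0)
      (fun z hz w hw hzw ↦ hinj hz hw (sub_left_injective hzw)) fun w hw ↦ ?_
    rw [← hkz, ← hφk w hw]
    ring
  have hφ_le := norm_deriv_le_one_of_injOn_comp_sq_div hφ hφ₀ hφinj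
  calc ‖deriv (deriv h) 0‖ = ‖2 * -(2 * deriv φ 0 * deriv h 0)‖ := by
        rw [← deriv_dslope_same hball hd, ← neg_neg (deriv (dslope h 0) 0), ← hφ', Nat.cast_ofNat]
    _ = 4 * ‖deriv φ 0‖ * ‖deriv h 0‖ := by
        simp only [norm_mul, norm_neg, Complex.norm_ofNat]
        ring
    _ ≤ 4 * ‖deriv h 0‖ := by
        gcongr
        linarith

end Bieberbach

section Koebe

/-- The automorphism of the unit disc that maps `0` to `w`. -/
def discTranslation (w z : ℂ) : ℂ := (z + w) / (1 + conj w * z)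

theorem discTranslation_zero (w : ℂ) : discTranslation w 0 = w := by simp [discTranslation]

theorem norm_one_add_conj_mul_sq_sub_norm_add_sq (w z : ℂ) :
    ‖1 + conj w * z‖ ^ 2 - ‖z + w‖ ^ 2 = (1 - ‖w‖ ^ 2) * (1 - ‖z‖ ^ 2) := by
  simp only [Complex.sq_norm, Complex.normSq_apply, Complex.add_re, Complex.add_im,
    Complex.mul_re, Complex.mul_im, Complex.conj_re, Complex.conj_im, Complex.one_re,
    Complex.one_im]
  ring

theorem norm_add_lt_norm_one_add_conj_mul {w z : ℂ} (hw : ‖w‖ < 1) (hz : ‖z‖ < 1) :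
    ‖z + w‖ < ‖1 + conj w * z‖ := by
  have hpos : 0 < (1 - ‖w‖ ^ 2) * (1 - ‖z‖ ^ 2) :=
    mul_pos (sub_pos.2 (pow_lt_one₀ (norm_nonneg w) hw two_ne_zero))
      (sub_pos.2 (pow_lt_one₀ (norm_nonneg z) hz two_ne_zero))
  rw [← norm_one_add_conj_mul_sq_sub_norm_add_sq, sub_pos] at hpos
  exact lt_of_pow_lt_pow_left₀ 2 (norm_nonneg _) hpos

theorem one_add_conj_mul_ne_zero {w z : ℂ} (hw : ‖w‖ < 1) (hz : ‖z‖ < 1) : 1 + conj w * z ≠ 0 :=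
  norm_pos_iff.1 ((norm_nonneg _).trans_lt (norm_add_lt_norm_one_add_conj_mul hw hz))

theorem one_sub_norm_sq_ne_zero {w : ℂ} (hw : ‖w‖ < 1) : 1 - (‖w‖ : ℂ) ^ 2 ≠ 0 := by
  have h : (1 - ‖w‖ ^ 2 : ℝ) ≠ 0 := (sub_pos.2 (pow_lt_one₀ (norm_nonneg w) hw two_ne_zero)).ne'
  exact_mod_cast h

theorem mapsTo_discTranslation {w : ℂ} (hw : ‖w‖ < 1) :
    MapsTo (discTranslation w) (ball 0 1) (ball 0 1) := fun z hz ↦ by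
  rw [mem_ball_zero_iff] at hz ⊢
  rw [discTranslation, norm_div, div_lt_one (norm_pos_iff.2 (one_add_conj_mul_ne_zero hw hz))]
  exact norm_add_lt_norm_one_add_conj_mul hw hz

theorem injOn_discTranslation {w : ℂ} (hw : ‖w‖ < 1) :
    InjOn (discTranslation w) (ball 0 1) := fun z hz v hv hzv ↦ by
  rw [mem_ball_zero_iff] at hz hv
  rw [discTranslation, discTranslation, div_eq_div_iff (one_add_conj_mul_ne_zero hw hz)
    (one_add_conj_mul_ne_zero hw hv)] at hzv
  refine sub_eq_zero.1 ((mul_eq_zero.1 ?_).resolve_left (one_sub_norm_sq_ne_zero hw))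
  linear_combination hzv + (z - v) * Complex.conj_mul' w

theorem hasDerivAt_discTranslation {w z : ℂ} (hz : 1 + conj w * z ≠ 0) :
    HasDerivAt (discTranslation w) ((1 - ‖w‖ ^ 2) / (1 + conj w * z) ^ 2) z := by
  refine (((hasDerivAt_id' z).add_const w).fun_div
    (((hasDerivAt_id' z).const_mul (conj w)).const_add 1) hz).congr_deriv ?_
  rw [← Complex.conj_mul' w]
  ring

theorem hasDerivAt_comp_discTranslation {h : ℂ → ℂ} (hd : DifferentiableOn ℂ h (ball 0 1)) {w z : ℂ}
    (hw : ‖w‖ < 1) (hz : ‖z‖ < 1) :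
    HasDerivAt (fun z ↦ h (discTranslation w z))
      (deriv h (discTranslation w z) * ((1 - ‖w‖ ^ 2) / (1 + conj w * z) ^ 2)) z :=
  (hd.differentiableAt (isOpen_ball.mem_nhds (mapsTo_discTranslation hw
    (mem_ball_zero_iff.2 hz)))).hasDerivAt.comp z
      (hasDerivAt_discTranslation (one_add_conj_mul_ne_zero hw hz))

theorem deriv_comp_discTranslation_zero {h : ℂ → ℂ} (hd : DifferentiableOn ℂ h (ball 0 1)) {w : ℂ}
    (hw : ‖w‖ < 1) :
    deriv (fun z ↦ h (discTranslation w z)) 0 = (1 - ‖w‖ ^ 2) * deriv h w := by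
  rw [(hasDerivAt_comp_discTranslation hd hw (by simp)).deriv, discTranslation_zero]
  ring

theorem deriv_deriv_comp_discTranslation_zero {h : ℂ → ℂ}
    (hd : DifferentiableOn ℂ h (ball 0 1)) {w : ℂ} (hw : ‖w‖ < 1) :
    deriv (deriv fun z ↦ h (discTranslation w z)) 0 =
      (1 - ‖w‖ ^ 2) * ((1 - ‖w‖ ^ 2) * deriv (deriv h) w - 2 * conj w * deriv h w) := by
  have hderiv : (deriv fun z ↦ h (discTranslation w z)) =ᶠ[𝓝 0] fun z ↦
      deriv h (discTranslation w z) * ((1 - ‖w‖ ^ 2) / (1 + conj w * z) ^ 2) := by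
    filter_upwards [ball_mem_nhds 0 one_pos] with z hz
    exact (hasDerivAt_comp_discTranslation hd hw (mem_ball_zero_iff.1 hz)).deriv
  have hcomp := hasDerivAt_comp_discTranslation (hd.deriv isOpen_ball) hw
    (z := 0) (by simp)
  have hquot := (hasDerivAt_const (0 : ℂ) (1 - (‖w‖ : ℂ) ^ 2)).fun_div
    ((((hasDerivAt_id' (0 : ℂ)).const_mul (conj w)).const_add 1).fun_pow 2) (by simp)
  rw [hderiv.deriv_eq, (hcomp.fun_mul hquot).deriv, discTranslation_zero]
  simp only [mul_zero, add_zero, one_pow, div_one, mul_one, Nat.cast_ofNat, Nat.add_one_sub_one,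
    zero_sub, mul_neg]
  ring

theorem norm_mul_deriv_deriv_sub_le {h : ℂ → ℂ} (hd : DifferentiableOn ℂ h (ball 0 1))
    (hinj : InjOn h (ball 0 1)) {w : ℂ} (hw : ‖w‖ < 1) (hne : deriv h w ≠ 0) :
    ‖(1 - ‖w‖ ^ 2) * deriv (deriv h) w - 2 * conj w * deriv h w‖ ≤ 4 * ‖deriv h w‖ := by
  have hw₀ := one_sub_norm_sq_ne_zero hw
  have hbieberbach := norm_deriv_deriv_zero_le (h := fun z ↦ h (discTranslation w z))
    (fun z hz ↦ (hasDerivAt_comp_discTranslation hd hw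
      (mem_ball_zero_iff.1 hz)).differentiableAt.differentiableWithinAt)
    (hinj.comp (injOn_discTranslation hw) (mapsTo_discTranslation hw))
    (deriv_comp_discTranslation_zero hd hw ▸ mul_ne_zero hw₀ hne)
  rw [deriv_deriv_comp_discTranslation_zero hd hw, deriv_comp_discTranslation_zero hd hw,
    norm_mul, norm_mul, mul_left_comm] at hbieberbach
  exact le_of_mul_le_mul_left hbieberbach (norm_pos_iff.2 hw₀)

end Koebe

section Distortion

theorem monotoneOn_div_of_mul_le_mul {p p' φ φ' : ℝ → ℝ} {D : Set ℝ} (hD : Convex ℝ D)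
    (hp : ∀ t ∈ D, HasDerivAt p (p' t) t) (hφ : ∀ t ∈ D, HasDerivAt φ (φ' t) t)
    (hφ_pos : ∀ t ∈ D, 0 < φ t) (hle : ∀ t ∈ D, p t * φ' t ≤ p' t * φ t) :
    MonotoneOn (fun t ↦ p t / φ t) D := by
  have hderiv (t : ℝ) (ht : t ∈ D) := (hp t ht).fun_div (hφ t ht) (hφ_pos t ht).ne'
  refine monotoneOn_of_hasDerivWithinAt_nonneg hD
    (fun t ht ↦ (hderiv t ht).continuousAt.continuousWithinAt)
    (fun t ht ↦ (hderiv t (interior_subset ht)).hasDerivWithinAt) fun t ht ↦ ?_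
  exact div_nonneg (sub_nonneg.2 (hle t (interior_subset ht))) (sq_nonneg _)

theorem hasDerivAt_one_sub_div_one_add_pow_sq {t : ℝ} (ht : t ∈ Ioo (-1) 1) :
    HasDerivAt (fun t ↦ ((1 - t) / (1 + t) ^ 3) ^ 2)
      ((4 * t - 8) / (1 - t ^ 2) * ((1 - t) / (1 + t) ^ 3) ^ 2) t := by
  have h_add : 1 + t ≠ 0 := by linarith [ht.1]
  have h_sub : 1 - t ≠ 0 := by linarith [ht.2]
  have h_sq : 1 - t ^ 2 = (1 + t) * (1 - t) := by ring
  refine ((((hasDerivAt_id' t).const_sub 1).fun_div (((hasDerivAt_id' t).const_add 1).fun_pow 3)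
    (pow_ne_zero 3 h_add)).fun_pow 2).congr_deriv ?_
  rw [h_sq]
  simp only [Nat.cast_ofNat, Nat.add_one_sub_one, pow_one]
  field_simp
  ring

theorem mul_one_sub_div_one_add_pow_sq_le {p p' : ℝ → ℝ}
    (hp : ∀ t ∈ Ico 0 1, HasDerivAt p (p' t) t)
    (hle : ∀ t ∈ Ico 0 1, (4 * t - 8) * p t ≤ (1 - t ^ 2) * p' t) {r : ℝ} (hr : r ∈ Ico 0 1) :
    p 0 * ((1 - r) / (1 + r) ^ 3) ^ 2 ≤ p r := by
  have hφ_pos (t : ℝ) (ht : t ∈ Ico 0 1) : 0 < ((1 - t) / (1 + t) ^ 3) ^ 2 := by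
    have := sub_pos.2 ht.2
    have := ht.1
    positivity
  have hmono := monotoneOn_div_of_mul_le_mul (convex_Ico 0 1) hp
    (fun t ht ↦ hasDerivAt_one_sub_div_one_add_pow_sq ⟨by linarith [ht.1], ht.2⟩) hφ_pos
    fun t ht ↦ by
      have h_sq : 0 < 1 - t ^ 2 := sub_pos.2 (pow_lt_one₀ ht.1 ht.2 two_ne_zero)
      rw [← mul_assoc]
      gcongr
      rw [mul_div_assoc', div_le_iff₀ h_sq]
      linarith [hle t ht]
  have h₀ := hmono ⟨le_rfl, one_pos⟩ hr hr.1
  rw [le_div_iff₀ (hφ_pos r hr)] at h₀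
  simpa using h₀

theorem le_mul_one_add_div_one_sub_pow_sq {p p' : ℝ → ℝ}
    (hp : ∀ t ∈ Ico 0 1, HasDerivAt p (p' t) t)
    (hle : ∀ t ∈ Ico 0 1, (1 - t ^ 2) * p' t ≤ (4 * t + 8) * p t) {r : ℝ} (hr : r ∈ Ico 0 1) :
    p r ≤ p 0 * ((1 + r) / (1 - r) ^ 3) ^ 2 := by
  have hφ_pos (t : ℝ) (ht : t ∈ Ico 0 1) : 0 < ((1 + t) / (1 - t) ^ 3) ^ 2 := by
    have := sub_pos.2 ht.2
    have := ht.1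
    positivity
  have hφ (t : ℝ) (ht : t ∈ Ico 0 1) : HasDerivAt (fun t ↦ ((1 + t) / (1 - t) ^ 3) ^ 2)
      ((4 * t + 8) / (1 - t ^ 2) * ((1 + t) / (1 - t) ^ 3) ^ 2) t := by
    have h_neg := (hasDerivAt_one_sub_div_one_add_pow_sq (t := -t)
      ⟨neg_lt_neg ht.2, by linarith [ht.1]⟩).comp t (hasDerivAt_neg t)
    simp only [Function.comp_def, sub_neg_eq_add, ← sub_eq_add_neg, neg_sq] at h_neg
    exact h_neg.congr_deriv (by ring)
  have hmono := monotoneOn_div_of_mul_le_mul (convex_Ico 0 1) (fun t ht ↦ (hp t ht).fun_neg)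
    hφ hφ_pos fun t ht ↦ by
      have h_sq : 0 < 1 - t ^ 2 := sub_pos.2 (pow_lt_one₀ ht.1 ht.2 two_ne_zero)
      rw [← mul_assoc]
      gcongr
      rw [mul_div_assoc', div_le_iff₀ h_sq]
      linarith [hle t ht]
  have h₀ := hmono ⟨le_rfl, one_pos⟩ hr hr.1
  rw [le_div_iff₀ (hφ_pos r hr)] at h₀
  simpa using h₀

theorem hasDerivAt_norm_deriv_mul_sq {h : ℂ → ℂ} {s : Set ℂ} (hs : IsOpen s)
    (hd : DifferentiableOn ℂ h s) {u : ℂ} {t : ℝ} (ht : t * u ∈ s) :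
    HasDerivAt (fun t : ℝ ↦ ‖deriv h (t * u)‖ ^ 2)
      (2 * inner ℝ (deriv h (t * u)) (deriv (deriv h) (t * u) * u)) t := by
  have hderiv := ((hd.deriv hs).differentiableAt (hs.mem_nhds ht)).hasDerivAt.comp (t : ℂ)
    ((hasDerivAt_id' (t : ℂ)).mul_const u)
  simpa using hderiv.comp_ofReal.norm_sq

theorem abs_mul_inner_deriv_sub_le {h : ℂ → ℂ} (hd : DifferentiableOn ℂ h (ball 0 1))
    (hinj : InjOn h (ball 0 1)) {u : ℂ} (hu : ‖u‖ = 1) {t : ℝ} (ht : t ∈ Ico 0 1) :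
    |(1 - t ^ 2) * (2 * inner ℝ (deriv h (t * u)) (deriv (deriv h) (t * u) * u)) -
      4 * t * ‖deriv h (t * u)‖ ^ 2| ≤ 8 * ‖deriv h (t * u)‖ ^ 2 := by
  have hnorm : ‖t * u‖ = t := by rw [norm_mul, hu, mul_one, Complex.norm_of_nonneg ht.1]
  set a := deriv h (t * u)
  set b := deriv (deriv h) (t * u)
  obtain ha | ha := eq_or_ne a 0
  · simp [ha]
  have hkoebe : ‖(1 - t ^ 2) • (b * u) - (2 * t) • a‖ ≤ 4 * ‖a‖ := by
    have hconj : conj (t * u) * u = t := by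
      rw [map_mul, Complex.conj_ofReal, mul_assoc, Complex.conj_mul', hu]
      simp
    have heq : (1 - t ^ 2) • (b * u) - (2 * t) • a =
        ((1 - (‖t * u‖ : ℂ) ^ 2) * b - 2 * conj (t * u) * a) * u := by
      rw [hnorm, Complex.real_smul, Complex.real_smul]
      push_cast
      linear_combination 2 * a * hconj
    rw [heq, norm_mul, hu, mul_one]
    exact norm_mul_deriv_deriv_sub_le hd hinj (hnorm.trans_lt ht.2) ha
  calc _ = 2 * |inner ℝ a ((1 - t ^ 2) • (b * u) - (2 * t) • a)| := by
        rw [inner_sub_right, real_inner_smul_right, real_inner_smul_right,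
          real_inner_self_eq_norm_sq, ← abs_two, ← abs_mul, abs_two]
        ring_nf
    _ ≤ 2 * (‖a‖ * (4 * ‖a‖)) := by
        gcongr
        exact (abs_real_inner_le_norm _ _).trans (by gcongr)
    _ = 8 * ‖a‖ ^ 2 := by ring

theorem norm_deriv_mem_Icc_of_injOn {h : ℂ → ℂ} (hd : DifferentiableOn ℂ h (ball 0 1))
    (hinj : InjOn h (ball 0 1)) {z : ℂ} (hz : z ∈ ball 0 1) :
    ‖deriv h z‖ ∈ Icc (‖deriv h 0‖ * ((1 - ‖z‖) / (1 + ‖z‖) ^ 3))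
      (‖deriv h 0‖ * ((1 + ‖z‖) / (1 - ‖z‖) ^ 3)) := by
  rw [mem_ball_zero_iff] at hz
  set u := Complex.exp (z.arg * Complex.I)
  have hu : ‖u‖ = 1 := Complex.norm_exp_ofReal_mul_I _
  have hzu : ‖z‖ * u = z := Complex.norm_mul_exp_arg_mul_I z
  have hp (t : ℝ) (ht : t ∈ Ico 0 1) := hasDerivAt_norm_deriv_mul_sq isOpen_ball hd (u := u)
    (t := t) (by rw [mem_ball_zero_iff, norm_mul, hu, mul_one, Complex.norm_of_nonneg ht.1]
                 exact ht.2)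
  have hle (t : ℝ) (ht : t ∈ Ico 0 1) := abs_le.1 (abs_mul_inner_deriv_sub_le hd hinj hu ht)
  have hr : ‖z‖ ∈ Ico 0 1 := ⟨norm_nonneg z, hz⟩
  have hlower := mul_one_sub_div_one_add_pow_sq_le hp (fun t ht ↦ by linarith [(hle t ht).1]) hr
  have hupper := le_mul_one_add_div_one_sub_pow_sq hp (fun t ht ↦ by linarith [(hle t ht).2]) hr
  simp only [hzu, Complex.ofReal_zero, zero_mul, ← mul_pow] at hlower hupper
  have := sub_pos.2 hz
  exact ⟨le_of_sq_le_sq hlower (norm_nonneg _), le_of_sq_le_sq hupper (by positivity)⟩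

end Distortion

section Slice

variable {X : Type*} [NormedAddCommGroup X] [NormedSpace ℂ X] {f : X → ℂ} {F : X → X} {u : X}

theorem mapsTo_smul_ball_zero_one (hu : ‖u‖ = 1) :
    MapsTo (fun z : ℂ ↦ z • u) (ball 0 1) (ball 0 1) := fun z hz ↦ by
  simpa [norm_smul, hu] using hz

theorem differentiableOn_mul_comp_smul (hf : DifferentiableOn ℂ f (ball 0 1)) (hu : ‖u‖ = 1) :
    DifferentiableOn ℂ (fun z : ℂ ↦ z * f (z • u)) (ball 0 1) :=
  differentiableOn_id.fun_mul (hf.comp (by fun_prop) (mapsTo_smul_ball_zero_one hu))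

theorem deriv_mul_comp_smul_zero (hf : ContinuousAt f 0) (u : X) :
    deriv (fun z : ℂ ↦ z * f (z • u)) 0 = f 0 := by
  refine HasDerivAt.deriv (hasDerivAt_iff_tendsto_slope_zero.2 ?_)
  have hcomp : Tendsto (fun z : ℂ ↦ f (z • u)) (𝓝[≠] 0) (𝓝 (f 0)) := by
    have hsmul : Tendsto (fun z : ℂ ↦ z • u) (𝓝[≠] 0) (𝓝 0) :=
      (tendsto_id.mono_left nhdsWithin_le_nhds).zero_smul_const u
    exact hf.tendsto.comp hsmul
  refine hcomp.congr' ?_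
  filter_upwards [self_mem_nhdsWithin] with z hz
  rw [zero_add, zero_mul, sub_zero, smul_eq_mul, inv_mul_cancel_left₀ hz]

theorem injOn_mul_comp_smul (hF : ∀ x ∈ ball 0 1, F x = f x • x) (hinj : InjOn F (ball 0 1))
    (hu : ‖u‖ = 1) : InjOn (fun z : ℂ ↦ z * f (z • u)) (ball 0 1) := fun z hz w hw hzw ↦ by
  have hmem := mapsTo_smul_ball_zero_one hu
  have hFz {z : ℂ} (hz : z ∈ ball 0 1) : F (z • u) = (z * f (z • u)) • u := by
    rw [hF _ (hmem hz), smul_smul, mul_comm]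
  have hu₀ : u ≠ 0 := ne_zero_of_norm_ne_zero (hu ▸ one_ne_zero)
  refine smul_left_injective ℂ hu₀ (hinj (hmem hz) (hmem hw) ?_)
  rw [hFz hz, hFz hw]
  exact congrArg (· • u) hzw

theorem fderiv_smul_apply (hf : DifferentiableOn ℂ f (ball 0 1))
    (hF : ∀ x ∈ ball 0 1, F x = f x • x) (hu : ‖u‖ = 1) {z : ℂ} (hz : z ∈ ball 0 1) :
    fderiv ℂ F (z • u) u = deriv (fun z : ℂ ↦ z * f (z • u)) z • u := by
  have hmem := mapsTo_smul_ball_zero_one hu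
  have hFd : DifferentiableOn ℂ F (ball 0 1) := (hf.smul differentiableOn_id).congr hF
  have hleft : HasDerivAt (fun z : ℂ ↦ F (z • u)) (fderiv ℂ F (z • u) u) z :=
    (hFd.differentiableAt (isOpen_ball.mem_nhds (hmem hz))).hasFDerivAt.comp_hasDerivAt z
      (by simpa using (hasDerivAt_id' z).smul_const u)
  have hright := ((differentiableOn_mul_comp_smul hf hu).differentiableAt
    (isOpen_ball.mem_nhds hz)).hasDerivAt.smul_const u
  refine hleft.unique (hright.congr_of_eventuallyEq ?_)
  filter_upwards [isOpen_ball.mem_nhds hz] with w hw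
  rw [hF _ (hmem hw), smul_smul, mul_comm]

end Slice

theorem stmt8_general {X : Type*} [NormedAddCommGroup X] [NormedSpace ℂ X]
    (f : X → ℂ) (hf : DifferentiableOn ℂ f (ball (0 : X) 1))
    (F : X → X) (hF : ∀ x ∈ ball (0 : X) 1, F x = f x • x) (hinj : InjOn F (ball (0 : X) 1)) :
    ∀ x ∈ ball (0 : X) 1,
      ‖f 0‖ * (‖x‖ * (1 - ‖x‖) / (1 + ‖x‖) ^ 3) ≤ ‖fderiv ℂ F x x‖ ∧
      ‖fderiv ℂ F x x‖ ≤ ‖f 0‖ * (‖x‖ * (1 + ‖x‖) / (1 - ‖x‖) ^ 3) := by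
  intro x hx
  obtain rfl | hx₀ := eq_or_ne x 0
  · simp
  obtain ⟨u, hu, hxu⟩ : ∃ u : X, ‖u‖ = 1 ∧ (‖x‖ : ℂ) • u = x :=
    ⟨(‖x‖ : ℂ)⁻¹ • x, norm_smul_inv_norm hx₀, smul_inv_smul₀ (by simpa using hx₀) x⟩
  have hxz : (‖x‖ : ℂ) ∈ ball 0 1 := by simpa using hx
  have hnorm : ‖fderiv ℂ F x x‖ = ‖x‖ * ‖deriv (fun z : ℂ ↦ z * f (z • u)) ‖x‖‖ := by
    have hderiv := fderiv_smul_apply hf hF hu hxz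
    rw [hxu] at hderiv
    nth_rw 2 [← hxu]
    rw [map_smul, hderiv, norm_smul, norm_smul, hu, mul_one, Complex.norm_real, norm_norm]
  obtain ⟨hlower, hupper⟩ := norm_deriv_mem_Icc_of_injOn (differentiableOn_mul_comp_smul hf hu)
    (injOn_mul_comp_smul hF hinj hu) hxz
  rw [deriv_mul_comp_smul_zero (hf.continuousOn.continuousAt (ball_mem_nhds 0 one_pos)),
    Complex.norm_real, norm_norm] at hlower hupper
  rw [hnorm, mul_div_assoc, mul_div_assoc, mul_left_comm, mul_left_comm ‖f 0‖]
  exact ⟨by gcongr, by gcongr⟩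

/-- **Distortion theorem along `x`.** Let `F(x) = f(x)·x` be biholomorphic on the unit ball
`𝔹` of a complex Banach space, with `f` holomorphic and `f(0) = 1`. Then for all `x ∈ 𝔹`,
`‖x‖(1−‖x‖)/(1+‖x‖)³ ≤ ‖DF(x)x‖ ≤ ‖x‖(1+‖x‖)/(1−‖x‖)³`. -/
theorem stmt8 {X : Type*} [NormedAddCommGroup X] [NormedSpace ℂ X] [CompleteSpace X]
    (f : X → ℂ) (hf : DifferentiableOn ℂ f (ball (0 : X) 1)) (hf0 : f 0 = 1)
    (F : X → X) (hF : ∀ x ∈ ball (0 : X) 1, F x = f x • x)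
    (hbi : IsBiholoOn F (ball (0 : X) 1)) :
    ∀ x ∈ ball (0 : X) 1,
      ‖x‖ * (1 - ‖x‖) / (1 + ‖x‖) ^ 3 ≤ ‖fderiv ℂ F x x‖ ∧
      ‖fderiv ℂ F x x‖ ≤ ‖x‖ * (1 + ‖x‖) / (1 - ‖x‖) ^ 3 := by
  simpa only [hf0, norm_one, one_mul] using stmt8_general f hf F hF hbi.2.1
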